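/- Let κ ∈ {2, 3, 4, …} and let η be a real random variable with E|η|^κ < ∞. Fix reals α₁, …, α_p, ω > 0 and β_{1+}, …, β_{p+}, β_{1−}, …, β_{p−} ≥ 0; set δ_i = max{ |α_i + β_{i+} η| , |α_i − β_{i−} η| } and a_i = E[ δ_i ( Σ_{j=1}^p δ_j )^{κ−1} ] for 1 ≤ i ≤ p. Then for every ε > 0 there exists L > 0 such that for all x = (x₁, …, x_p) ∈ ℝ^p with ‖x‖_κ > L, E[ ( Σ_{i=1}^p δ_i |x_i| + ω |η| )^κ ] ≤ Σ_{i=1}^p a_i |x_i|^κ + ε ‖x‖_κ^κ. -/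

import Mathlib

/-!
By Jensen's inequality for the weights `δ i`, the main part `T = ∑ i, δ i * |x i|` satisfies
`T ^ κ ≤ ∑ i, δ i * (∑ j, δ j) ^ (κ - 1) * |x i| ^ κ`, whose expectation is `∑ i, a i * |x i| ^ κ`.
Since `t ↦ t ^ κ` is convex, adding `e` to `T` costs at most `κ * (T + e) ^ (κ - 1) * e`. As `T + e`
grows at most linearly in `N = ‖x‖_κ`, the expected cost is `O(N ^ (κ - 1))`, which is eventually
below `ε * N ^ κ`.
-/

open MeasureTheory

section RealInequalities

variable {κ : ℝ}

lemma rpow_add_mul_sub_le_rpow {x y : ℝ} (hκ : 1 ≤ κ) (hx : 0 ≤ x) (hy : 0 ≤ y) :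
    x ^ κ + κ * x ^ (κ - 1) * (y - x) ≤ y ^ κ := by
  rcases hx.eq_or_lt with rfl | hx
  · rcases hκ.eq_or_lt with rfl | hκ
    · simp
    · simpa [Real.zero_rpow (by linarith : κ ≠ 0), Real.zero_rpow (by linarith : κ - 1 ≠ 0)]
        using Real.rpow_nonneg hy κ
  · have bernoulli : 1 + κ * (y / x - 1) ≤ (1 + (y / x - 1)) ^ κ :=
      one_add_mul_self_le_rpow_one_add (by linarith [div_nonneg hy hx.le]) hκ
    calc x ^ κ + κ * x ^ (κ - 1) * (y - x)
        = x ^ κ * (1 + κ * (y / x - 1)) := by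
          rw [Real.rpow_sub_one hx.ne']; field_simp
      _ ≤ x ^ κ * (1 + (y / x - 1)) ^ κ := by gcongr
      _ = y ^ κ := by
          rw [add_sub_cancel, Real.div_rpow hy hx.le, mul_div_cancel₀ _ (by positivity)]

variable {ι : Type*} [Fintype ι]

lemma rpow_sum_mul_le_sum_mul_rpow {d z : ι → ℝ} (hκ : 1 ≤ κ)
    (hd : ∀ i, 0 ≤ d i) (hz : ∀ i, 0 ≤ z i) :
    (∑ i, d i * z i) ^ κ ≤ ∑ i, d i * (∑ j, d j) ^ (κ - 1) * z i ^ κ := by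
  have hκ₀ : κ ≠ 0 := by positivity
  have hS : 0 ≤ ∑ i, d i := Finset.sum_nonneg fun i _ => hd i
  have hT : 0 ≤ ∑ i, d i * z i := Finset.sum_nonneg fun i _ => mul_nonneg (hd i) (hz i)
  have hR : 0 ≤ ∑ i, d i * z i ^ κ :=
    Finset.sum_nonneg fun i _ => mul_nonneg (hd i) (Real.rpow_nonneg (hz i) κ)
  calc (∑ i, d i * z i) ^ κ
      ≤ ((∑ i, d i) ^ (1 - κ⁻¹) * (∑ i, d i * z i ^ κ) ^ κ⁻¹) ^ κ :=
        Real.rpow_le_rpow hT (Real.inner_le_weight_mul_Lp_of_nonneg _ hκ d z hd hz) (by positivity)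
    _ = (∑ i, d i) ^ (κ - 1) * ∑ i, d i * z i ^ κ := by
        rw [Real.mul_rpow (by positivity) (by positivity), ← Real.rpow_mul hS,
          Real.rpow_inv_rpow hR hκ₀, sub_mul, one_mul, inv_mul_cancel₀ hκ₀]
    _ = ∑ i, d i * (∑ j, d j) ^ (κ - 1) * z i ^ κ := by
        rw [Finset.mul_sum]
        exact Finset.sum_congr rfl fun i _ => by ring

lemma le_rpow_sum_rpow {z : ι → ℝ} (hκ : 0 < κ) (hz : ∀ i, 0 ≤ z i) (i : ι) :
    z i ≤ (∑ j, z j ^ κ) ^ (1 / κ) := by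
  have hpow (j : ι) : 0 ≤ z j ^ κ := Real.rpow_nonneg (hz j) κ
  rw [one_div, Real.le_rpow_inv_iff_of_pos (hz i) (Finset.sum_nonneg fun j _ => hpow j) hκ]
  exact Finset.single_le_sum (f := fun j => z j ^ κ) (fun j _ => hpow j) (Finset.mem_univ i)

lemma rpow_sum_mul_add_le {d z : ι → ℝ} {e N : ℝ} (hκ : 1 ≤ κ)
    (hd : ∀ i, 0 ≤ d i) (hz : ∀ i, 0 ≤ z i) (he : 0 ≤ e) (hN : 1 ≤ N) (hzN : ∀ i, z i ≤ N) :
    (∑ i, d i * z i + e) ^ κ ≤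
      ∑ i, d i * (∑ j, d j) ^ (κ - 1) * z i ^ κ
        + κ * N ^ (κ - 1) * (e * (∑ j, d j + e) ^ (κ - 1)) := by
  set T := ∑ i, d i * z i
  set S := ∑ j, d j
  have hT : 0 ≤ T := Finset.sum_nonneg fun i _ => mul_nonneg (hd i) (hz i)
  have hS : 0 ≤ S := Finset.sum_nonneg fun i _ => hd i
  have tangent : (T + e) ^ κ + κ * (T + e) ^ (κ - 1) * (T - (T + e)) ≤ T ^ κ :=
    rpow_add_mul_sub_le_rpow hκ (by positivity) hT
  have jensen : T ^ κ ≤ ∑ i, d i * S ^ (κ - 1) * z i ^ κ :=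
    rpow_sum_mul_le_sum_mul_rpow hκ hd hz
  have hTN : T ≤ N * S := by
    rw [Finset.mul_sum]
    exact Finset.sum_le_sum fun i _ => by
      rw [mul_comm]; exact mul_le_mul_of_nonneg_right (hzN i) (hd i)
  have growth : (T + e) ^ (κ - 1) ≤ N ^ (κ - 1) * (S + e) ^ (κ - 1) := by
    rw [← Real.mul_rpow (by positivity) (by positivity)]
    have hlin : T + e ≤ N * (S + e) := by nlinarith
    exact Real.rpow_le_rpow (by positivity) hlin (by linarith)
  have cost : κ * e * (T + e) ^ (κ - 1) ≤ κ * e * (N ^ (κ - 1) * (S + e) ^ (κ - 1)) := by gcongr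
  linarith

end RealInequalities

section Expectation

variable {Ω : Type*} [MeasurableSpace Ω] {μ : Measure Ω} {κ : ℝ}

lemma integrable_mul_rpow_sub_one {f g : Ω → ℝ} (hκ : 1 ≤ κ)
    (hf : MemLp f (ENNReal.ofReal κ) μ) (hg : MemLp g (ENNReal.ofReal κ) μ) :
    Integrable (fun ω => f ω * g ω ^ (κ - 1)) μ := by
  have hκ₀ : 0 < κ := by linarith
  have hsum : Integrable (fun ω => (|f ω| + |g ω|) ^ κ) μ := by
    refine ((hf.abs.add hg.abs).integrable_norm_rpow (by simpa using hκ₀)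
      ENNReal.ofReal_ne_top).congr (ae_of_all μ fun ω => ?_)
    change ‖|f ω| + |g ω|‖ ^ (ENNReal.ofReal κ).toReal = _
    rw [ENNReal.toReal_ofReal hκ₀.le, Real.norm_of_nonneg (by positivity)]
  refine hsum.mono' (hf.1.mul (hg.1.aemeasurable.pow_const _).aestronglyMeasurable)
    (ae_of_all μ fun ω => ?_)
  calc ‖f ω * g ω ^ (κ - 1)‖
      ≤ |f ω| * |g ω| ^ (κ - 1) := by
        rw [norm_mul]
        exact mul_le_mul_of_nonneg_left (Real.abs_rpow_le_abs_rpow _ _) (norm_nonneg _)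
    _ ≤ (|f ω| + |g ω|) * (|f ω| + |g ω|) ^ (κ - 1) := by
        gcongr
        · exact le_add_of_nonneg_right (abs_nonneg _)
        · exact le_add_of_nonneg_left (abs_nonneg _)
    _ = (|f ω| + |g ω|) ^ κ := by
        rw [← Real.rpow_one_add' (by positivity) (by linarith), add_sub_cancel]

variable {ι : Type*} [Fintype ι] {δ : ι → Ω → ℝ} {e : Ω → ℝ}

lemma integral_rpow_sum_mul_add_le (hκ : 1 ≤ κ) (hδ : ∀ i, 0 ≤ᵐ[μ] δ i) (he : 0 ≤ᵐ[μ] e)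
    (hδκ : ∀ i, MemLp (δ i) (ENNReal.ofReal κ) μ) (heκ : MemLp e (ENNReal.ofReal κ) μ)
    {z : ι → ℝ} {N : ℝ} (hz : ∀ i, 0 ≤ z i) (hN : 1 ≤ N) (hzN : ∀ i, z i ≤ N) :
    ∫ ω, (∑ i, δ i ω * z i + e ω) ^ κ ∂μ ≤
      ∑ i, (∫ ω, δ i ω * (∑ j, δ j ω) ^ (κ - 1) ∂μ) * z i ^ κ
        + κ * N ^ (κ - 1) * ∫ ω, e ω * (∑ j, δ j ω + e ω) ^ (κ - 1) ∂μ := by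
  have hδ' : ∀ᵐ ω ∂μ, ∀ i, 0 ≤ δ i ω := ae_all_iff.2 hδ
  have hSκ : MemLp (fun ω => ∑ j, δ j ω) (ENNReal.ofReal κ) μ :=
    memLp_finsetSum _ fun i _ => hδκ i
  have hmain (i : ι) : Integrable (fun ω => δ i ω * (∑ j, δ j ω) ^ (κ - 1) * z i ^ κ) μ :=
    (integrable_mul_rpow_sub_one hκ (hδκ i) hSκ).mul_const _
  have hcost : Integrable
      (fun ω => κ * N ^ (κ - 1) * (e ω * (∑ j, δ j ω + e ω) ^ (κ - 1))) μ :=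
    (integrable_mul_rpow_sub_one hκ heκ (hSκ.add heκ)).const_mul _
  calc ∫ ω, (∑ i, δ i ω * z i + e ω) ^ κ ∂μ
      ≤ ∫ ω, (∑ i, δ i ω * (∑ j, δ j ω) ^ (κ - 1) * z i ^ κ
          + κ * N ^ (κ - 1) * (e ω * (∑ j, δ j ω + e ω) ^ (κ - 1))) ∂μ := by
        refine integral_mono_of_nonneg ?_ ((integrable_finsetSum _ fun i _ => hmain i).add hcost) ?_
        · filter_upwards [hδ', he] with ω hδω heω
          exact Real.rpow_nonneg
            (add_nonneg (Finset.sum_nonneg fun i _ => mul_nonneg (hδω i) (hz i)) heω) κ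
        · filter_upwards [hδ', he] with ω hδω heω
          exact rpow_sum_mul_add_le hκ hδω hz heω hN hzN
    _ = _ := by
        rw [integral_add (integrable_finsetSum _ fun i _ => hmain i) hcost,
          integral_finsetSum _ fun i _ => hmain i, integral_const_mul]
        simp only [integral_mul_const]

theorem expectation_pow_le_eventually_general (hκ : 1 ≤ κ) (hδ : ∀ i, 0 ≤ᵐ[μ] δ i)
    (he : 0 ≤ᵐ[μ] e) (hδκ : ∀ i, MemLp (δ i) (ENNReal.ofReal κ) μ)
    (heκ : MemLp e (ENNReal.ofReal κ) μ) :
    ∀ ε > (0 : ℝ), ∃ L > (0 : ℝ), ∀ x : ι → ℝ,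
      L < (∑ i, |x i| ^ κ) ^ (1 / κ) →
      ∫ ω, (∑ i, δ i ω * |x i| + e ω) ^ κ ∂μ ≤
        ∑ i, (∫ ω, δ i ω * (∑ j, δ j ω) ^ (κ - 1) ∂μ) * |x i| ^ κ
          + ε * ∑ i, |x i| ^ κ := by
  intro ε hε
  set C := ∫ ω, e ω * (∑ j, δ j ω + e ω) ^ (κ - 1) ∂μ
  refine ⟨max 1 (κ * C / ε), by positivity, fun x hx => ?_⟩
  set N := (∑ i, |x i| ^ κ) ^ (1 / κ) with hN
  have hN₁ : 1 < N := (le_max_left _ _).trans_lt hx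
  have hCN : κ * C ≤ ε * N := (div_le_iff₀' hε).1 ((le_max_right _ _).trans_lt hx).le
  have hxN (i : ι) : |x i| ≤ N :=
    le_rpow_sum_rpow (by linarith) (fun j => abs_nonneg (x j)) i
  refine (integral_rpow_sum_mul_add_le hκ hδ he hδκ heκ (fun i => abs_nonneg (x i)) hN₁.le
    hxN).trans (add_le_add_right ?_ _)
  calc κ * N ^ (κ - 1) * C = κ * C * N ^ (κ - 1) := by ring
    _ ≤ ε * N * N ^ (κ - 1) := by gcongr
    _ = ε * N ^ κ := by
        rw [mul_assoc, ← Real.rpow_one_add' (by linarith) (by linarith), add_sub_cancel]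
    _ = ε * ∑ i, |x i| ^ κ := by
        rw [hN, one_div, Real.rpow_inv_rpow (by positivity) (by positivity)]

lemma memLp_of_integrable_abs_pow {f : Ω → ℝ} {n : ℕ} (hn : n ≠ 0)
    (hf : AEStronglyMeasurable f μ) (hint : Integrable (fun ω => |f ω| ^ n) μ) :
    MemLp f (ENNReal.ofReal n) μ := by
  rw [← integrable_norm_rpow_iff hf (by simpa using hn) ENNReal.ofReal_ne_top]
  simpa using hint

lemma memLp_max_abs_add_abs_sub [IsFiniteMeasure μ] {q : ENNReal} {η : Ω → ℝ} (hη : MemLp η q μ)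
    (a b c : ℝ) : MemLp (fun ω => max |a + b * η ω| |a - c * η ω|) q μ :=
  ((memLp_const a).add (hη.const_mul b)).abs.sup ((memLp_const a).sub (hη.const_mul c)).abs

end Expectation

/-- Let `κ ∈ {2,3,4,…}` and let `η` be a real random variable with `E|η|^κ < ∞`. For
reals `α_i`, `ω > 0`, nonnegative `β_{i+}, β_{i−}`, set
`δ_i = max{|α_i + β_{i+}η|, |α_i − β_{i−}η|}` and `a_i = E[δ_i (Σ_j δ_j)^{κ−1}]`.
Then for every `ε > 0` there is `L > 0` such that for all `x` with `‖x‖_κ > L`,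
`E[(Σ_i δ_i |x_i| + ω|η|)^κ] ≤ Σ_i a_i |x_i|^κ + ε ‖x‖_κ^κ`. -/
theorem expectation_pow_le_eventually
    {Ω : Type*} [MeasurableSpace Ω] (μ : Measure Ω) [IsProbabilityMeasure μ]
    (κ : ℕ) (hκ : 2 ≤ κ)
    (η : Ω → ℝ) (hmeas : Measurable η)
    (hmom : Integrable (fun ω' => |η ω'| ^ κ) μ)
    (p : ℕ) (α : Fin p → ℝ) (ω : ℝ) (hω : 0 < ω)
    (βp βm : Fin p → ℝ) (hβp : ∀ i, 0 ≤ βp i) (hβm : ∀ i, 0 ≤ βm i) :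
    ∀ ε > (0 : ℝ), ∃ L > (0 : ℝ), ∀ x : Fin p → ℝ,
      L < (∑ i, |x i| ^ κ) ^ ((1 : ℝ) / κ) →
      ∫ ω', ((∑ i, max |α i + βp i * η ω'| |α i - βm i * η ω'| * |x i|)
          + ω * |η ω'|) ^ κ ∂μ ≤
        (∑ i, (∫ ω', max |α i + βp i * η ω'| |α i - βm i * η ω'|
            * (∑ j, max |α j + βp j * η ω'| |α j - βm j * η ω'|) ^ (κ - 1) ∂μ)
              * |x i| ^ κ)
          + ε * ∑ i, |x i| ^ κ := by
  have hη : MemLp η (ENNReal.ofReal κ) μ :=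
    memLp_of_integrable_abs_pow (by omega) hmeas.aestronglyMeasurable hmom
  have hκ₁ : ((κ - 1 : ℕ) : ℝ) = (κ : ℝ) - 1 := Nat.cast_pred (by omega)
  simpa only [← hκ₁, Real.rpow_natCast] using
    expectation_pow_le_eventually_general (κ := κ) (by norm_cast; omega)
      (fun i => ae_of_all μ fun ω' => (abs_nonneg (α i + βp i * η ω')).trans (le_max_left _ _))
      (ae_of_all μ fun ω' => mul_nonneg hω.le (abs_nonneg (η ω')))
      (fun i => memLp_max_abs_add_abs_sub hη (α i) (βp i) (βm i)) (hη.abs.const_mul ω)
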